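/- Let A and B be nonempty closed convex subsets of E and let x̄ ∈ A ∩ B. Suppose there exist c ∈ [0,1) and ρ > 0 such that for every x₀ ∈ A ∩ B_ρ(x̄) the alternating projections sequence x_{k+1} = P_A(P_B x_k) converges R-linearly with rate c to some point of A ∩ B (i.e. there exist x̃ ∈ A ∩ B and γ > 0 with ‖x_k − x̃‖ ≤ γ·c^k for all k ∈ ℕ). Then dist(x, A ∩ B) ≤ (1/(1−c))·dist(x, B) for all x ∈ A ∩ B_ρ(x̄); in particular {A,B} is subtransversal at x̄ with constant at most 1/(1−c). -/

import Mathlib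

theorem ap_proj_inner {E : Type*} [NormedAddCommGroup E] [InnerProductSpace ℝ E]
    {A : Set E} (hA : Convex ℝ A) {y p : E} (hp : p ∈ A) (h : ‖y - p‖ = Metric.infDist y A) :
    ∀ w ∈ A, inner ℝ (y - p) (w - p) ≤ 0 := by
  refine (norm_eq_iInf_iff_real_inner_le_zero hA hp).1 ?_
  rw [h, Metric.infDist_eq_iInf]
  simp only [dist_eq_norm]

theorem ap_step {E : Type*} [NormedAddCommGroup E] [InnerProductSpace ℝ E]
    (a0 b0 a1 b1 : E) (h1 : inner ℝ (b0 - a1) (a0 - a1) ≤ (0 : ℝ))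
    (h2 : inner ℝ (a0 - b0) (b1 - b0) ≤ (0 : ℝ)) :
    ‖b0 - a1‖ ^ 2 ≤ ‖a0 - b0‖ * ‖a1 - b1‖ := by
  have h3 := real_inner_le_norm (a0 - b0) (a1 - b1)
  have h4 : ‖b0 - a1‖ ^ 2 = inner ℝ (b0 - a1) (a0 - a1) + inner ℝ (a0 - b0) (b1 - b0)
      + inner ℝ (a0 - b0) (a1 - b1) := by
    rw [← real_inner_self_eq_norm_sq]
    simp only [inner_sub_left, inner_sub_right, real_inner_comm]
    have e1 := real_inner_comm a0 b0
    have e2 := real_inner_comm a0 a1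
    have e3 := real_inner_comm a1 b0
    linarith
  linarith

theorem ap_nonexp {E : Type*} [NormedAddCommGroup E] [InnerProductSpace ℝ E]
    (a0 b0 a1 : E) (h1 : inner ℝ (b0 - a1) (a0 - a1) ≤ (0 : ℝ)) :
    ‖a0 - a1‖ ≤ ‖a0 - b0‖ := by
  have h3 := real_inner_le_norm (a0 - b0) (a0 - a1)
  have h4 : ‖a0 - a1‖ ^ 2 = inner ℝ (b0 - a1) (a0 - a1) + inner ℝ (a0 - b0) (a0 - a1) := by
    rw [← real_inner_self_eq_norm_sq, ← inner_add_left]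
    congr 1
    abel
  by_contra! h
  nlinarith [norm_nonneg (a0 - b0)]

theorem ap_logconvex (e : ℕ → ℝ) (he : ∀ k, 0 ≤ e k) (hl : ∀ k, e (k+1) ^ 2 ≤ e k * e (k+2))
    (c γ : ℝ) (hc : 0 ≤ c) (hb : ∀ k, e k ≤ γ * c ^ k) : e 1 ≤ c * e 0 := by
  by_contra! h
  have h1 : 0 < e 1 := lt_of_le_of_lt (mul_nonneg hc (he 0)) h
  have h0 : 0 < e 0 := by
    rcases (he 0).lt_or_eq with h0 | h0
    · exact h0
    · have := hl 0
      simp only [zero_add] at this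
      rw [← h0] at this
      nlinarith
  obtain ⟨r, hr⟩ : ∃ r, r = e 1 / e 0 := ⟨_, rfl⟩
  have hr0 : 0 < r := by rw [hr]; positivity
  have hre : e 1 = r * e 0 := by rw [hr]; field_simp
  have hcr : c < r := by rw [hr, lt_div_iff₀ h0]; exact h
  have key : ∀ k, 0 < e k ∧ r * e k ≤ e (k+1) := by
    intro k
    induction k with
    | zero => exact ⟨h0, hre.ge⟩
    | succ k ih =>
      obtain ⟨i1, i2⟩ := ih
      have i3 : 0 < e (k+1) := lt_of_lt_of_le (by positivity) i2
      refine ⟨i3, ?_⟩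
      have := hl k
      have h5 : e k * (r * e (k+1)) ≤ e k * e (k+2) := by nlinarith
      exact le_of_mul_le_mul_left h5 i1
  have low : ∀ k, r ^ k * e 0 ≤ e k := by
    intro k
    induction k with
    | zero => simp
    | succ k ih =>
      have := (key k).2
      calc r ^ (k+1) * e 0 = r * (r ^ k * e 0) := by ring
        _ ≤ r * e k := by gcongr
        _ ≤ _ := this
  have hlim : Filter.Tendsto (fun k : ℕ => γ * (c / r) ^ k) Filter.atTop (nhds (γ * 0)) :=
    (tendsto_pow_atTop_nhds_zero_of_lt_one (by positivity)
      ((div_lt_one hr0).2 hcr)).const_mul γ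
  have : e 0 ≤ γ * 0 := by
    refine ge_of_tendsto' hlim fun k => ?_
    have := (low k).trans (hb k)
    rw [div_pow, ← mul_div_assoc, le_div_iff₀ (by positivity)]
    linarith
  linarith

/-- If every alternating projections sequence between the nonempty closed
convex sets `A`, `B` starting in `A ∩ B_ρ(xbar)` converges R-linearly with rate `c` to a
point of `A ∩ B`, then `dist(x, A ∩ B) ≤ (1/(1−c))·dist(x, B)` for all
`x ∈ A ∩ B_ρ(xbar)`; in particular `{A,B}` is subtransversal at `xbar` with constant at
most `1/(1−c)`. -/
theorem subtransversality_necessary_for_Rlinear_convergence_convex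
    {E : Type*} [NormedAddCommGroup E] [InnerProductSpace ℝ E] [FiniteDimensional ℝ E]
    (A B : Set E) (hAne : A.Nonempty) (hAc : IsClosed A) (hAconv : Convex ℝ A)
    (hBne : B.Nonempty) (hBc : IsClosed B) (hBconv : Convex ℝ B)
    (PA PB : E → E)
    (hPA : ∀ y, PA y ∈ A ∧ ‖y - PA y‖ = Metric.infDist y A)
    (hPB : ∀ y, PB y ∈ B ∧ ‖y - PB y‖ = Metric.infDist y B)
    (xbar : E) (hxbar : xbar ∈ A ∩ B)
    (c ρ : ℝ) (hc0 : 0 ≤ c) (hc1 : c < 1) (hρ : 0 < ρ)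
    (hconv : ∀ x : ℕ → E, x 0 ∈ A ∩ Metric.ball xbar ρ →
      (∀ k, x (k + 1) = PA (PB (x k))) →
      ∃ xlim ∈ A ∩ B, ∃ γ > (0 : ℝ), ∀ k, ‖x k - xlim‖ ≤ γ * c ^ k) :
    ∀ x ∈ A ∩ Metric.ball xbar ρ,
      Metric.infDist x (A ∩ B) ≤ (1 / (1 - c)) * Metric.infDist x B := by
  intro x0 hx0
  have iA := fun y => ap_proj_inner hAconv (hPA y).1 (hPA y).2
  have iB := fun y => ap_proj_inner hBconv (hPB y).1 (hPB y).2
  obtain ⟨x, hx⟩ : ∃ x : ℕ → E, x = fun k => (fun y => PA (PB y))^[k] x0 := ⟨_, rfl⟩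
  have hz : x 0 = x0 := by simp [hx]
  have hs : ∀ k, x (k + 1) = PA (PB (x k)) := by
    intro k
    simp only [hx, Function.iterate_succ_apply']
  obtain ⟨xl, hxl, γ, hγ, hb⟩ := hconv x (by rw [hz]; exact hx0) hs
  have hxA : ∀ k, x k ∈ A := by
    intro k
    cases k with
    | zero => rw [hz]; exact hx0.1
    | succ k => rw [hs]; exact (hPA _).1
  obtain ⟨e, he⟩ : ∃ e : ℕ → ℝ, e = fun k => ‖x k - PB (x k)‖ := ⟨_, rfl⟩
  have hek : ∀ k, e k = ‖x k - PB (x k)‖ := fun k => by rw [he]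
  have he0 : ∀ k, 0 ≤ e k := fun k => by rw [hek]; exact norm_nonneg _
  have heb : ∀ k, e k ≤ γ * c ^ k := by
    intro k
    rw [hek, (hPB _).2]
    refine (Metric.infDist_le_dist_of_mem hxl.2).trans ?_
    rw [dist_eq_norm]
    exact hb k
  have hA1 : ∀ k, inner ℝ (PB (x k) - x (k+1)) (x k - x (k+1)) ≤ (0:ℝ) := by
    intro k
    rw [hs]
    exact iA _ _ (hxA k)
  have s1 : ∀ k, ‖PB (x k) - x (k+1)‖ ^ 2 ≤ e k * e (k+1) := by
    intro k
    rw [hek, hek]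
    exact ap_step _ _ _ _ (hA1 k) (iB _ _ (hPB _).1)
  have s2 : ∀ k, e (k+1) ^ 2 ≤ ‖PB (x k) - x (k+1)‖ * ‖PB (x (k+1)) - x (k+2)‖ := by
    intro k
    rw [hek]
    refine ap_step _ _ _ _ (iB _ _ (hPB _).1) ?_
    have := iA (PB (x k)) _ (hxA (k+2))
    rwa [← hs] at this
  have hl : ∀ k, e (k+1) ^ 2 ≤ e k * e (k+2) := by
    intro k
    rcases (he0 (k+1)).lt_or_eq with h | h
    · have a := s1 k
      have b := s1 (k+1)
      have d := s2 k
      have h4 : (e (k+1) ^ 2) ^ 2 ≤ (e k * e (k+1)) * (e (k+1) * e (k+2)) := by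
        calc (e (k+1) ^ 2) ^ 2 ≤ (‖PB (x k) - x (k+1)‖ * ‖PB (x (k+1)) - x (k+2)‖) ^ 2 := by
              gcongr
          _ = ‖PB (x k) - x (k+1)‖ ^ 2 * ‖PB (x (k+1)) - x (k+2)‖ ^ 2 := by ring
          _ ≤ _ := mul_le_mul a b (by positivity) (mul_nonneg (he0 _) (he0 _))
      have h5 : e (k+1) ^ 2 * e (k+1) ^ 2 ≤ e (k+1) ^ 2 * (e k * e (k+2)) := by linarith
      exact le_of_mul_le_mul_left h5 (by positivity)
    · rw [← h]
      have := mul_nonneg (he0 k) (he0 (k+2))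
      linarith
  have hdec : ∀ k, e (k+1) ≤ c * e k := by
    intro k
    have := ap_logconvex (fun j => e (k + j)) (fun j => he0 _) (fun j => hl (k + j)) c (γ * c ^ k)
      hc0 (fun j => by rw [mul_assoc, ← pow_add]; exact heb _)
    simpa using this
  have hgeo : ∀ k, e k ≤ e 0 * c ^ k := by
    intro k
    induction k with
    | zero => simp
    | succ k ih =>
      calc e (k+1) ≤ c * e k := hdec k
        _ ≤ c * (e 0 * c ^ k) := by gcongr
        _ = _ := by ring
  have hlim : Filter.Tendsto x Filter.atTop (nhds xl) := by
    rw [tendsto_iff_norm_sub_tendsto_zero]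
    refine squeeze_zero (fun _ => norm_nonneg _) hb ?_
    simpa using (tendsto_pow_atTop_nhds_zero_of_lt_one hc0 hc1).const_mul γ
  have hfin := dist_le_of_le_geometric_of_tendsto₀ c (e 0) hc1 (f := x) (fun k => by
    rw [dist_eq_norm]
    refine (ap_nonexp _ _ _ (hA1 k)).trans ?_
    rw [← hek]
    exact hgeo k) hlim
  refine (Metric.infDist_le_dist_of_mem hxl).trans ?_
  rw [hz, hek, (hPB _).2, hz] at hfin
  rw [one_div_mul_eq_div]
  exact hfin
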